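/- Let S be a specification, P a program that is c-s-correct w.r.t. a c-s-specification (pre, post), and Q0 a well-asserted query. Let D = Q0,…,Qn;θ1,…,θn be an LD-derivation for P with Q0 = A,Q′ and Q1 = (B⃗0,!,B⃗1,Q′)θ1 (so the first clause variant employed in D is C = H ← B⃗0,!,B⃗1), and suppose Q1,…,Qn is a successful subderivation of D for B⃗0θ1 (so Qn = (!,B⃗1,Q′)θ1⋯θn). Suppose S ⊨ Q0σ0 for some ground instance Q0σ0 of Q0, and that Aσ0 is c-covered by C w.r.t. S, pre, post. Then there exists a ground instance Qnσ′ of Qn such that S ⊨ Qnσ′; moreover, Q0σ0 is the first and Qnσ′ the last query of an unrestricted LD-derivation D′ for P such that D is a lift of D′. -/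

import Mathlib

/-! The cut lemma holds because c-coveredness already supplies the ground instance needed; the
work lies in gluing it to the given derivation.

Let `θ₀` be the first mgu and `φ` the composition of the later ones. Deleting the suffix `Q'`
from all queries gives a derivation for the atom `A`, which lies in `pre` because `Q 0` is
well-asserted (`Deriv.truncate`). By c-s-correctness every atomic computed answer in it lies in
`post`, so the computed answer for the prefix `B0 θ₀` consists of atoms of `post ∪ {!}`
(`Deriv.answers_in_post`). Ground this answer by some `γ` and let `η` be `φγ` restricted to
`vars (B0 θ₀)`. Condition (3) of c-coveredness, with `ρ` the restriction of `θ₀` to the head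
variables, yields `θ` with `H θ₀ η θ = A σ0` and `S ⊨ B1 θ₀ η θ`.

It remains to find `σ'` such that `θ₀ φ σ'` agrees with `θ₀ η θ` on the clause and with `σ0` on
`Q 0`. All variables the later mgu's touch lie in a set `W` consisting of `vars (B0 θ₀)` and of
variables of later clause variants (`DStep.vars_within`, `compN_within`), and by standardization
apart `W` meets the earlier variables only in `vars (B0 θ₀)`. Hence `σ'` can be taken as `γ` on
`W` and, off `W`, as `ηθ` on the variables of `C θ₀` and as `σ0` elsewhere. On `A` the
requirement follows from `A θ₀ = H θ₀`; the remaining variables of `Q'` are fixed by `θ₀`.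

The unrestricted derivation is obtained by instantiating the `i`-th query of `D` with the mgu's
still to come followed by `σ'` (`Deriv.exists_lowering`). -/

/- Formalization of definite clause programs with the cut (Prolog),
   LD-resolution, LD-trees, pruning by the cut, specifications,
   correctness and completeness notions. -/

namespace LP

/-- First-order terms over function symbols `F`; variables are indexed by `ℕ`. -/
inductive Tm (F : Type) : Type
  | var : ℕ → Tm F
  | fn  : F → List (Tm F) → Tm F

/-- Ordinary (non-cut) atoms over function symbols `F` and predicate symbols `Pr`. -/
structure Atom (F Pr : Type) : Type where
  pred : Pr
  args : List (Tm F)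

/-- Extended atoms: ordinary atoms together with the cut `!`. -/
inductive EAtom (F Pr : Type) : Type
  | cut : EAtom F Pr
  | atm : Atom F Pr → EAtom F Pr

/-- A query is a finite sequence of extended atoms. -/
abbrev Query (F Pr : Type) := List (EAtom F Pr)

/-- A definite clause (whose body may contain cuts). -/
structure Clause (F Pr : Type) : Type where
  head : Atom F Pr
  body : Query F Pr

/-- A program (with cuts) is a finite sequence of clauses. -/
abbrev Prog (F Pr : Type) := List (Clause F Pr)

/-- Substitutions. -/
abbrev Subst (F : Type) := ℕ → Tm F

variable {F Pr : Type}

/-- The empty (identity) substitution. -/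
def Subst.idS : Subst F := fun n => Tm.var n

/-- Applying a substitution to a term. -/
def Tm.subst (θ : Subst F) : Tm F → Tm F
  | .var n => θ n
  | .fn f ts => .fn f (ts.attach.map (fun t => Tm.subst θ t.1))
decreasing_by
  have := List.sizeOf_lt_of_mem t.2
  simp only [Tm.fn.sizeOf_spec]
  omega

/-- The list of variables of a term. -/
def Tm.varsL : Tm F → List ℕ
  | .var n => [n]
  | .fn _ ts => ts.attach.flatMap (fun t => Tm.varsL t.1)
decreasing_by
  have := List.sizeOf_lt_of_mem t.2
  simp only [Tm.fn.sizeOf_spec]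
  omega

/-- The set of variables of a term. -/
def Tm.vars (t : Tm F) : Set ℕ := {n | n ∈ t.varsL}

/-- A term is ground if it has no variables. -/
def Tm.Ground (t : Tm F) : Prop := t.vars = ∅

def Atom.subst (θ : Subst F) (A : Atom F Pr) : Atom F Pr :=
  ⟨A.pred, A.args.map (Tm.subst θ)⟩

def Atom.vars (A : Atom F Pr) : Set ℕ := {n | ∃ t ∈ A.args, n ∈ t.vars}

/-- A ground atom (an element of the Herbrand base `HB` when it moreover holds). -/
def Atom.Ground (A : Atom F Pr) : Prop := A.vars = ∅

def EAtom.subst (θ : Subst F) : EAtom F Pr → EAtom F Pr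
  | .cut => .cut
  | .atm A => .atm (Atom.subst θ A)

def EAtom.vars : EAtom F Pr → Set ℕ
  | .cut => ∅
  | .atm A => A.vars

def EAtom.Ground (a : EAtom F Pr) : Prop := a.vars = ∅

def Query.subst (θ : Subst F) (Q : Query F Pr) : Query F Pr := Q.map (EAtom.subst θ)

def Query.vars (Q : Query F Pr) : Set ℕ := {n | ∃ a ∈ Q, n ∈ EAtom.vars a}

def Query.Ground (Q : Query F Pr) : Prop := Query.vars Q = ∅

def Clause.subst (θ : Subst F) (C : Clause F Pr) : Clause F Pr :=
  ⟨Atom.subst θ C.head, Query.subst θ C.body⟩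

def Clause.vars (C : Clause F Pr) : Set ℕ := C.head.vars ∪ Query.vars C.body

def Clause.Ground (C : Clause F Pr) : Prop := C.vars = ∅

/-- The domain of a substitution. -/
def Subst.dom (θ : Subst F) : Set ℕ := {n | θ n ≠ .var n}

/-- The range variables of a substitution. -/
def Subst.rng (θ : Subst F) : Set ℕ := {m | ∃ n, θ n ≠ .var n ∧ m ∈ (θ n).vars}

/-- All variables of a substitution. -/
def Subst.varSet (θ : Subst F) : Set ℕ := θ.dom ∪ θ.rng

/-- Composition: apply `θ` first, then `σ`. -/
def Subst.comp (θ σ : Subst F) : Subst F := fun n => (θ n).subst σ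

/-- A substitution is idempotent when its domain and range are disjoint. -/
def Subst.Idempotent (θ : Subst F) : Prop := Disjoint θ.dom θ.rng

/-- A substitution is ground if it maps every domain variable to a ground term. -/
def Subst.GroundOn (θ : Subst F) : Prop := ∀ n ∈ θ.dom, (θ n).Ground

/-- `compN θ i k` is the composition `θ i ; θ (i+1) ; ⋯ ; θ (i+k-1)`. -/
def compN (θ : ℕ → Subst F) : ℕ → ℕ → Subst F
  | _, 0 => Subst.idS
  | i, k+1 => Subst.comp (θ i) (compN θ (i+1) k)

/-- `θ` unifies atoms `A` and `B`. -/
def Unifies (θ : Subst F) (A B : Atom F Pr) : Prop := Atom.subst θ A = Atom.subst θ B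

/-- `θ` is a most general unifier of `A` and `B`. -/
def IsMgu (θ : Subst F) (A B : Atom F Pr) : Prop :=
  Unifies θ A B ∧ ∀ σ : Subst F, Unifies σ A B → ∃ δ : Subst F, ∀ n, σ n = (θ n).subst δ

/-- A unifier is relevant if all its variables occur in the unified atoms. -/
def Relevant (θ : Subst F) (A B : Atom F Pr) : Prop := θ.varSet ⊆ A.vars ∪ B.vars

/-- `B` is an instance of `A`. -/
def Atom.Inst (B A : Atom F Pr) : Prop := ∃ θ : Subst F, B = Atom.subst θ A

/-- `Q'` is an instance of `Q`. -/
def Query.Inst (Q' Q : Query F Pr) : Prop := ∃ θ : Subst F, Q' = Query.subst θ Q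

/-- `C'` is an instance of `C`. -/
def Clause.Inst (C' C : Clause F Pr) : Prop := ∃ θ : Subst F, C' = Clause.subst θ C

/-- `C` and `C'` are variants of each other. -/
def Variant (C C' : Clause F Pr) : Prop := Clause.Inst C C' ∧ Clause.Inst C' C

/-! ### Specifications -/

/-- Membership of an extended atom in `S ∪ {!}`. -/
def EAtomIn (S : Set (Atom F Pr)) : EAtom F Pr → Prop
  | .cut => True
  | .atm A => A ∈ S

/-- `S ⊨ Q`: every atom of `Q` is in `S ∪ {!}`. -/
def SpecModels (S : Set (Atom F Pr)) (Q : Query F Pr) : Prop := ∀ a ∈ Q, EAtomIn S a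

/-- A set of atoms is closed under substitution. -/
def SubstClosed (S : Set (Atom F Pr)) : Prop := ∀ A ∈ S, ∀ θ : Subst F, Atom.subst θ A ∈ S

/-- The restriction of a set of atoms to ground atoms (to `HB`). -/
def HBRestrict (S : Set (Atom F Pr)) : Set (Atom F Pr) := {A ∈ S | A.Ground}

/-- A ground atom `A` is covered by clause `C` w.r.t. `S`:
`A` is the head of a ground instance of `C` whose body atoms are in `S ∪ {!}`. -/
def CoveredBy (S : Set (Atom F Pr)) (C : Clause F Pr) (A : Atom F Pr) : Prop :=
  ∃ θ : Subst F, Clause.Ground (Clause.subst θ C) ∧ Atom.subst θ C.head = A ∧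
    SpecModels S (Query.subst θ C.body)

/-- The least Herbrand model of `P` (the cut is treated as true). -/
inductive MP (P : Prog F Pr) : Atom F Pr → Prop where
  | step : ∀ C ∈ P, ∀ θ : Subst F, Clause.Ground (Clause.subst θ C) →
      (∀ A : Atom F Pr, EAtom.atm A ∈ Query.subst θ C.body → MP P A) →
      MP P (Atom.subst θ C.head)

/-! ### General interpretations and logical consequence -/

structure Interp (F Pr : Type) : Type 1 where
  carrier : Type
  fnI : F → List carrier → carrier
  predI : Pr → List carrier → Prop

def Interp.evalTm (I : Interp F Pr) (v : ℕ → I.carrier) : Tm F → I.carrier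
  | .var n => v n
  | .fn f ts => I.fnI f (ts.attach.map (fun t => I.evalTm v t.1))
decreasing_by
  have := List.sizeOf_lt_of_mem t.2
  simp only [Tm.fn.sizeOf_spec]
  omega

def Interp.holdsA (I : Interp F Pr) (v : ℕ → I.carrier) (A : Atom F Pr) : Prop :=
  I.predI A.pred (A.args.map (I.evalTm v))

/-- The cut is true in every interpretation. -/
def Interp.holdsE (I : Interp F Pr) (v : ℕ → I.carrier) : EAtom F Pr → Prop
  | .cut => True
  | .atm A => I.holdsA v A

def Interp.holdsQ (I : Interp F Pr) (v : ℕ → I.carrier) (Q : Query F Pr) : Prop :=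
  ∀ a ∈ Q, I.holdsE v a

def Interp.ModelsClause (I : Interp F Pr) (C : Clause F Pr) : Prop :=
  ∀ v : ℕ → I.carrier, I.holdsQ v C.body → I.holdsA v C.head

def Interp.ModelsProg (I : Interp F Pr) (P : Prog F Pr) : Prop :=
  ∀ C ∈ P, I.ModelsClause C

/-- `P ⊨ Q` (truth of a formula is truth of its universal closure). -/
def Entails (P : Prog F Pr) (Q : Query F Pr) : Prop :=
  ∀ I : Interp F Pr, I.ModelsProg P → ∀ v : ℕ → I.carrier, I.holdsQ v Q

/-- `M` (a set of ground atoms) is a Herbrand model of `P`. -/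
def HerbModels (M : Set (Atom F Pr)) (P : Prog F Pr) : Prop :=
  ∀ C ∈ P, ∀ θ : Subst F, Clause.Ground (Clause.subst θ C) →
    (∀ A : Atom F Pr, EAtom.atm A ∈ Query.subst θ C.body → A ∈ M) →
    Atom.subst θ C.head ∈ M

/-- Removing all occurrences of the cut from a query. -/
def rmCutQ (Q : Query F Pr) : Query F Pr :=
  Q.filterMap (fun a => match a with | .cut => none | .atm A => some (.atm A))

/-- Removing all occurrences of the cut from a program. -/
def rmCutProg (P : Prog F Pr) : Prog F Pr := P.map (fun C => ⟨C.head, rmCutQ C.body⟩)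

/-! ### LD-derivations -/

/-- Variables occurring in the queries `Q 0 … Q i`, the mgu's `sub 0 … sub (i-1)`
and the clause variants `cls 0 … cls (i-1)` of a derivation. -/
def histVars (Q : ℕ → Query F Pr) (sub : ℕ → Subst F)
    (cls : ℕ → Option (Clause F Pr)) (i : ℕ) : Set ℕ :=
  {n | (∃ j ≤ i, n ∈ Query.vars (Q j)) ∨ (∃ j < i, n ∈ (sub j).varSet) ∨
       (∃ j < i, ∃ C : Clause F Pr, cls j = some C ∧ n ∈ C.vars)}

/-- One LD-resolution step (names the clause variant used, if any):
either a leading cut is deleted, or the first atom is resolved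
with a clause via an idempotent relevant mgu. -/
def DStep (Q Q' : Query F Pr) (θ : Subst F) (oc : Option (Clause F Pr)) : Prop :=
  (∃ rest : Query F Pr, Q = .cut :: rest ∧ Q' = rest ∧ θ = Subst.idS ∧ oc = none) ∨
  (∃ (A : Atom F Pr) (rest : Query F Pr) (C : Clause F Pr),
      Q = .atm A :: rest ∧ oc = some C ∧
      IsMgu θ A C.head ∧ θ.Idempotent ∧ Relevant θ A C.head ∧
      Q' = Query.subst θ (C.body ++ rest))

/-- A finite LD-derivation: queries `Q 0, …, Q len`,
mgu's `sub 0, …, sub (len-1)` and clause variants `cls 0, …, cls (len-1)`,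
with clause variants standardized apart. -/
structure Deriv (F Pr : Type) : Type where
  len : ℕ
  Q : ℕ → Query F Pr
  sub : ℕ → Subst F
  cls : ℕ → Option (Clause F Pr)
  step : ∀ i < len, DStep (Q i) (Q (i+1)) (sub i) (cls i)
  fresh : ∀ i < len, ∀ C : Clause F Pr, cls i = some C →
    Disjoint C.vars (histVars Q sub cls i)

/-- The derivation only uses (variants of) clauses of the program `P`. -/
def Deriv.FromProg (P : Prog F Pr) (D : Deriv F Pr) : Prop :=
  ∀ i < D.len, ∀ C : Clause F Pr, D.cls i = some C → ∃ C0 ∈ P, Variant C C0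

def Deriv.Successful (D : Deriv F Pr) : Prop := D.Q D.len = []

/-- The computed answer `Q0 θ1 ⋯ θn` of a derivation. -/
def Deriv.answer (D : Deriv F Pr) : Query F Pr := Query.subst (compN D.sub 0 D.len) (D.Q 0)

/-- At position `j` the query has a (protected) suffix of length `L`; the prefix
before it succeeds exactly at position `m` (the subderivation for the prefix ends there). -/
def Deriv.SuffixEndsAt (D : Deriv F Pr) (j L m : ℕ) : Prop :=
  j ≤ m ∧ m ≤ D.len ∧ (∀ i, j ≤ i → i < m → L < (D.Q i).length) ∧ (D.Q m).length = L

/-- An infinite LD-derivation. -/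
structure InfLD (F Pr : Type) (P : Prog F Pr) : Type where
  Q : ℕ → Query F Pr
  sub : ℕ → Subst F
  cls : ℕ → Option (Clause F Pr)
  step : ∀ i : ℕ, DStep (Q i) (Q (i+1)) (sub i) (cls i)
  fresh : ∀ i : ℕ, ∀ C : Clause F Pr, cls i = some C →
    Disjoint C.vars (histVars Q sub cls i)
  prog : ∀ i : ℕ, ∀ C : Clause F Pr, cls i = some C → ∃ C0 ∈ P, Variant C C0

/-- One SLD-resolution step, with an arbitrarily selected atom. -/
def SStep (Q Q' : Query F Pr) (θ : Subst F) (oc : Option (Clause F Pr)) : Prop :=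
  (∃ l r : Query F Pr, Q = l ++ .cut :: r ∧ Q' = l ++ r ∧ θ = Subst.idS ∧ oc = none) ∨
  (∃ (l r : Query F Pr) (A : Atom F Pr) (C : Clause F Pr),
      Q = l ++ .atm A :: r ∧ oc = some C ∧
      IsMgu θ A C.head ∧ θ.Idempotent ∧ Relevant θ A C.head ∧
      Q' = Query.subst θ (l ++ C.body ++ r))

/-- An infinite SLD-derivation (under an arbitrary selection rule). -/
structure InfSLD (F Pr : Type) (P : Prog F Pr) : Type where
  Q : ℕ → Query F Pr
  sub : ℕ → Subst F
  cls : ℕ → Option (Clause F Pr)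
  step : ∀ i : ℕ, SStep (Q i) (Q (i+1)) (sub i) (cls i)
  fresh : ∀ i : ℕ, ∀ C : Clause F Pr, cls i = some C →
    Disjoint C.vars (histVars Q sub cls i)
  prog : ∀ i : ℕ, ∀ C : Clause F Pr, cls i = some C → ∃ C0 ∈ P, Variant C C0

/-! ### Unrestricted LD-derivations and lifts -/

/-- One step of an unrestricted LD-derivation for program `P`. -/
def UStep (P : Prog F Pr) (Q Q' : Query F Pr) (θ : Subst F)
    (oc : Option (Clause F Pr)) : Prop :=
  (∃ rest : Query F Pr, Q = .cut :: rest ∧ Q' = rest ∧ θ = Subst.idS ∧ oc = none) ∨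
  (∃ (A : Atom F Pr) (rest B : Query F Pr) (C : Clause F Pr),
      Q = .atm A :: rest ∧ oc = some C ∧ C ∈ P ∧ Subst.dom θ ⊆ Query.vars Q ∧
      Clause.Inst ⟨Atom.subst θ A, B⟩ C ∧ Q' = B ++ Query.subst θ rest)

/-- A finite unrestricted LD-derivation for `P`. -/
structure UDeriv (F Pr : Type) (P : Prog F Pr) : Type where
  len : ℕ
  Q : ℕ → Query F Pr
  sub : ℕ → Subst F
  cls : ℕ → Option (Clause F Pr)
  step : ∀ i < len, UStep P (Q i) (Q (i+1)) (sub i) (cls i)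

def UDeriv.Successful {P : Prog F Pr} (E : UDeriv F Pr P) : Prop := E.Q E.len = []

def UDeriv.answer {P : Prog F Pr} (E : UDeriv F Pr P) : Query F Pr :=
  Query.subst (compN E.sub 0 E.len) (E.Q 0)

/-- The LD-derivation `D` is a lift of the unrestricted LD-derivation `E`. -/
def IsLift {P : Prog F Pr} (D : Deriv F Pr) (E : UDeriv F Pr P) : Prop :=
  Query.Inst (E.Q 0) (D.Q 0) ∧ D.len = E.len ∧
  (∀ i < D.len, (E.cls i = none ↔ D.cls i = none) ∧
    ∀ C C' : Clause F Pr, E.cls i = some C → D.cls i = some C' → Variant C' C)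

/-! ### c-s-specifications (call-success specifications) -/

/-- `P` is c-s-correct w.r.t. `(pre, post)`: in every LD-derivation beginning with an
atomic query from `pre`, each selected atom is in `pre ∪ {!}` and each atomic computed
answer of a successful subderivation is in `post ∪ {!}`. -/
def CsCorrect (P : Prog F Pr) (pre post : Set (Atom F Pr)) : Prop :=
  ∀ D : Deriv F Pr, D.FromProg P → (∃ A ∈ pre, D.Q 0 = [.atm A]) →
    (∀ i ≤ D.len, ∀ (a : EAtom F Pr) (rest : Query F Pr), D.Q i = a :: rest →
        a = .cut ∨ ∃ A ∈ pre, a = .atm A) ∧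
    (∀ j m : ℕ, ∀ (A : Atom F Pr) (rest : Query F Pr), D.Q j = .atm A :: rest →
        D.SuffixEndsAt j rest.length m →
        Atom.subst (compN D.sub j (m - j)) A ∈ post)

/-- The `i`-th element of `Q` (if any) is in `S ∪ {!}`. -/
def QIn (S : Set (Atom F Pr)) (Q : Query F Pr) (i : ℕ) : Prop :=
  ∀ a : EAtom F Pr, Q[i]? = some a → EAtomIn S a

/-- A clause is well-asserted w.r.t. a c-s-specification `(pre, post)`. -/
def WellAssertedClause (pre post : Set (Atom F Pr)) (C : Clause F Pr) : Prop :=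
  ∀ θ : Subst F, Atom.subst θ C.head ∈ pre →
    (∀ k < C.body.length,
      (∀ i < k, QIn post (Query.subst θ C.body) i) → QIn pre (Query.subst θ C.body) k) ∧
    ((∀ i < C.body.length, QIn post (Query.subst θ C.body) i) → Atom.subst θ C.head ∈ post)

/-- A query is well-asserted w.r.t. `(pre, post)`. -/
def WellAssertedQuery (pre post : Set (Atom F Pr)) (Q : Query F Pr) : Prop :=
  ∀ θ : Subst F, ∀ k < Q.length,
    (∀ i < k, QIn post (Query.subst θ Q) i) → QIn pre (Query.subst θ Q) k

/-! ### c-coveredness -/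

/-- Ground atom `A` is c-covered w.r.t. `S` and `(pre, post)` by the clause `C`,
which is (a variant of) the `i`-th clause of `P`. -/
def CCoveredBy (P : Prog F Pr) (S pre post : Set (Atom F Pr)) (A : Atom F Pr)
    (C : Clause F Pr) (i : ℕ) : Prop :=
  (∃ C0 : Clause F Pr, P[i]? = some C0 ∧ Variant C C0) ∧
  CoveredBy S C A ∧
  (∀ j < i, ∀ (H' : Atom F Pr) (A0 A1 : Query F Pr),
      P[j]? = some ⟨H', A0 ++ .cut :: A1⟩ → EAtom.cut ∉ A0 → H'.pred = C.head.pred →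
      ∀ H'' ∈ pre, Atom.Inst A H'' →
        ∀ θ : Subst F, Atom.Ground (Atom.subst θ H'') →
          ¬ CoveredBy (HBRestrict post) ⟨H', A0⟩ (Atom.subst θ H'')) ∧
  (∀ B0 B1 : Query F Pr, C.body = B0 ++ .cut :: B1 →
    ∀ ρ : Subst F, Subst.dom ρ ⊆ C.head.vars → (Subst.rng ρ ∩ C.vars) ⊆ C.head.vars →
      Disjoint (Subst.dom ρ) (Subst.rng ρ) →
      Atom.subst ρ C.head ∈ pre → Atom.Inst A (Atom.subst ρ C.head) →
      ∀ η : Subst F, Subst.dom η = Query.vars (Query.subst ρ B0) →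
        Query.Ground (Query.subst η (Query.subst ρ B0)) →
        SpecModels post (Query.subst η (Query.subst ρ B0)) →
        CoveredBy S ⟨Atom.subst η (Atom.subst ρ C.head),
                     Query.subst η (Query.subst ρ B1)⟩ A)

/-- `A` is c-covered by some clause of `P`. -/
def CCoveredByProg (P : Prog F Pr) (S pre post : Set (Atom F Pr)) (A : Atom F Pr) : Prop :=
  ∃ (i : ℕ) (C : Clause F Pr), P[i]? = some C ∧ CCoveredBy P S pre post A C i

/-! ### Level mappings, recurrence, acceptability -/

/-- Extension of a level mapping to extended atoms, with `|!| = 0`. -/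
def eLvl (lvl : Atom F Pr → ℕ) : EAtom F Pr → ℕ
  | .cut => 0
  | .atm A => lvl A

/-- `P` is recurrent w.r.t. the level mapping `lvl`. -/
def Recurrent (P : Prog F Pr) (lvl : Atom F Pr → ℕ) : Prop :=
  ∀ C ∈ P, ∀ θ : Subst F, Clause.Ground (Clause.subst θ C) →
    ∀ a ∈ Query.subst θ C.body, eLvl lvl a < lvl (Atom.subst θ C.head)

/-- `P` is acceptable w.r.t. the specification `S` and the level mapping `lvl`. -/
def Acceptable (P : Prog F Pr) (S : Set (Atom F Pr)) (lvl : Atom F Pr → ℕ) : Prop :=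
  (∀ A : Atom F Pr, MP P A → A ∈ S) ∧
  (∀ C ∈ P, ∀ θ : Subst F, Clause.Ground (Clause.subst θ C) →
    ∀ i < C.body.length, (∀ j < i, QIn S (Query.subst θ C.body) j) →
      ∀ a : EAtom F Pr, (Query.subst θ C.body)[i]? = some a →
        eLvl lvl a < lvl (Atom.subst θ C.head))

/-- A query is bounded w.r.t. a level mapping. -/
def BoundedQuery (lvl : Atom F Pr → ℕ) (Q : Query F Pr) : Prop :=
  ∃ k : ℕ, ∀ a ∈ Q, ∀ θ : Subst F, EAtom.Ground (EAtom.subst θ a) →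
    eLvl lvl (EAtom.subst θ a) < k

/-! ### Completeness notions -/

/-- `P` is complete for the query `Q` w.r.t. `S`. -/
def CompleteFor (P : Prog F Pr) (S : Set (Atom F Pr)) (Q : Query F Pr) : Prop :=
  ∀ θ : Subst F, Query.Ground (Query.subst θ Q) → SpecModels S (Query.subst θ Q) →
    ∀ A : Atom F Pr, EAtom.atm A ∈ Query.subst θ Q → MP P A

end LP

namespace LP

variable {F Pr : Type}

/-! ### LD-trees and SLD-trees -/

/-- A clause is applicable to an atom if (a variant of) its head unifies with it. -/
def Applicable (A : Atom F Pr) (C0 : Clause F Pr) : Prop :=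
  ∃ (C : Clause F Pr) (θ : Subst F), Variant C C0 ∧ Atom.subst θ A = Atom.subst θ C.head

open Classical in
/-- The clauses of `P` applicable to `A`, in program order. -/
noncomputable def applicables (P : Prog F Pr) (A : Atom F Pr) : Prog F Pr :=
  P.filter (fun C0 => decide (Applicable A C0))

/-- Variables occurring in the labels, mgu's and clause variants along the path
from the root to `p` (inclusive). -/
def pathVarsAux (label : List ℕ → Query F Pr) (esub : List ℕ → Subst F)
    (ecls : List ℕ → Option (Clause F Pr)) (p : List ℕ) : Set ℕ :=
  {n | ∃ q : List ℕ, q <+: p ∧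
        (n ∈ Query.vars (label q) ∨ n ∈ (esub q).varSet ∨
         ∃ C : Clause F Pr, ecls q = some C ∧ n ∈ C.vars)}

/-- The LD-tree for a program `P` and an initial query `Q0`.  Nodes are coded by
lists of child indices (the root is `[]`); `label` gives the query at a node,
`esub` and `ecls` the mgu and the clause variant of the edge into a node. -/
structure LDTree (F Pr : Type) (P : Prog F Pr) (Q0 : Query F Pr) : Type where
  dom : Set (List ℕ)
  label : List ℕ → Query F Pr
  esub : List ℕ → Subst F
  ecls : List ℕ → Option (Clause F Pr)
  root_mem : [] ∈ dom
  root_label : label [] = Q0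
  root_esub : esub [] = Subst.idS
  root_ecls : ecls [] = none
  prefix_closed : ∀ p q : List ℕ, p <+: q → q ∈ dom → p ∈ dom
  sibling_closed : ∀ (p : List ℕ) (k k' : ℕ), k' ≤ k → p ++ [k] ∈ dom → p ++ [k'] ∈ dom
  empty_leaf : ∀ p ∈ dom, label p = [] → ∀ k : ℕ, p ++ [k] ∉ dom
  cut_step : ∀ p ∈ dom, ∀ rest : Query F Pr, label p = .cut :: rest →
    (p ++ [0] ∈ dom ∧ label (p ++ [0]) = rest ∧ esub (p ++ [0]) = Subst.idS ∧
     ecls (p ++ [0]) = none ∧ ∀ k : ℕ, k ≠ 0 → p ++ [k] ∉ dom)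
  atom_children_mem : ∀ p ∈ dom, ∀ (A : Atom F Pr) (rest : Query F Pr),
    label p = .atm A :: rest →
    ∀ k : ℕ, (p ++ [k] ∈ dom ↔ k < (applicables P A).length)
  atom_step : ∀ p ∈ dom, ∀ (A : Atom F Pr) (rest : Query F Pr),
    label p = .atm A :: rest → ∀ k : ℕ, p ++ [k] ∈ dom →
      ∃ C C0 : Clause F Pr, (applicables P A)[k]? = some C0 ∧
        ecls (p ++ [k]) = some C ∧ Variant C C0 ∧
        IsMgu (esub (p ++ [k])) A C.head ∧ (esub (p ++ [k])).Idempotent ∧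
        Relevant (esub (p ++ [k])) A C.head ∧
        label (p ++ [k]) = Query.subst (esub (p ++ [k])) (C.body ++ rest) ∧
        Disjoint C.vars (pathVarsAux label esub ecls p)

/-- An SLD-tree for `P` and `Q0`, under the selection rule `sel`
(`sel p` is the position of the selected atom of the query at node `p`). -/
structure SLDTree (F Pr : Type) (P : Prog F Pr) (Q0 : Query F Pr) : Type where
  dom : Set (List ℕ)
  label : List ℕ → Query F Pr
  sel : List ℕ → ℕ
  esub : List ℕ → Subst F
  ecls : List ℕ → Option (Clause F Pr)
  root_mem : [] ∈ dom
  root_label : label [] = Q0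
  root_esub : esub [] = Subst.idS
  root_ecls : ecls [] = none
  prefix_closed : ∀ p q : List ℕ, p <+: q → q ∈ dom → p ∈ dom
  sibling_closed : ∀ (p : List ℕ) (k k' : ℕ), k' ≤ k → p ++ [k] ∈ dom → p ++ [k'] ∈ dom
  empty_leaf : ∀ p ∈ dom, label p = [] → ∀ k : ℕ, p ++ [k] ∉ dom
  sel_lt : ∀ p ∈ dom, label p ≠ [] → sel p < (label p).length
  cut_step : ∀ p ∈ dom, ∀ l r : Query F Pr, label p = l ++ .cut :: r → sel p = l.length →
    (p ++ [0] ∈ dom ∧ label (p ++ [0]) = l ++ r ∧ esub (p ++ [0]) = Subst.idS ∧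
     ecls (p ++ [0]) = none ∧ ∀ k : ℕ, k ≠ 0 → p ++ [k] ∉ dom)
  atom_children_mem : ∀ p ∈ dom, ∀ (l : Query F Pr) (A : Atom F Pr) (r : Query F Pr),
    label p = l ++ .atm A :: r → sel p = l.length →
    ∀ k : ℕ, (p ++ [k] ∈ dom ↔ k < (applicables P A).length)
  atom_step : ∀ p ∈ dom, ∀ (l : Query F Pr) (A : Atom F Pr) (r : Query F Pr),
    label p = l ++ .atm A :: r → sel p = l.length → ∀ k : ℕ, p ++ [k] ∈ dom →
      ∃ C C0 : Clause F Pr, (applicables P A)[k]? = some C0 ∧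
        ecls (p ++ [k]) = some C ∧ Variant C C0 ∧
        IsMgu (esub (p ++ [k])) A C.head ∧ (esub (p ++ [k])).Idempotent ∧
        Relevant (esub (p ++ [k])) A C.head ∧
        label (p ++ [k]) = Query.subst (esub (p ++ [k])) (l ++ C.body ++ r) ∧
        Disjoint C.vars (pathVarsAux label esub ecls p)

/-- `P` is semi-complete w.r.t. `S`: complete for every query possessing a finite SLD-tree. -/
def SemiComplete (P : Prog F Pr) (S : Set (Atom F Pr)) : Prop :=
  ∀ Q : Query F Pr, (∃ T : SLDTree F Pr P Q, T.dom.Finite) → CompleteFor P S Q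

/-! ### The preorder sequence `seq(T)` and pruning -/

/-- The subtree of `S` rooted at `q` is finite. -/
def SubtreeFin (S : Set (List ℕ)) (q : List ℕ) : Prop := {x ∈ S | q <+: x}.Finite

/-- Node `p` occurs in the preorder sequence `seq` of the subgraph `S`:
all subtrees to the left of the path to `p` are finite. -/
def InSeq (S : Set (List ℕ)) (p : List ℕ) : Prop :=
  p ∈ S ∧ ∀ (q : List ℕ) (k k' : ℕ), (q ++ [k]) <+: p → k' < k → SubtreeFin S (q ++ [k'])

/-- `p` strictly precedes `q` in the preorder ordering of tree nodes. -/
def PreLt (p q : List ℕ) : Prop :=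
  (p <+: q ∧ p ≠ q) ∨
  ∃ (r : List ℕ) (a b : ℕ), a < b ∧ (r ++ [a]) <+: p ∧ (r ++ [b]) <+: q

variable {P : Prog F Pr} {Q0 : Query F Pr}

/-- An executing node: a node whose query starts with the cut. -/
def LDTree.ExecNode (T : LDTree F Pr P Q0) (e : List ℕ) : Prop :=
  ∃ rest : Query F Pr, T.label e = .cut :: rest

/-- `s` is the first node `Q_j` of the cutting sequence of the executing node `e`:
the protected suffix of length `|label e|` persists from `s` to `e`,
and `s` is the shallowest such node. -/
def LDTree.CutStart (T : LDTree F Pr P Q0) (e s : List ℕ) : Prop :=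
  s <+: e ∧
  (∀ q : List ℕ, s <+: q → q <+: e → q ≠ e → (T.label e).length < (T.label q).length) ∧
  (s = [] ∨ ∃ (p : List ℕ) (k : ℕ), s = p ++ [k] ∧
      ¬ ((T.label e).length < (T.label p).length))

/-- The introducing node of a cutting sequence starting at `s`
(for a cut of the initial query it is the root itself). -/
def cutIntro (s : List ℕ) : List ℕ := if s = [] then [] else s.dropLast

/-- `x` is pruned by (the cutting sequence of) the executing node `e`:
`x` lies in a subtree rooted at a child, to the right of the cutting sequence,
of a node of the cutting sequence. -/
def LDTree.PrunedByExec (T : LDTree F Pr P Q0) (e x : List ℕ) : Prop :=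
  T.ExecNode e ∧ ∃ s : List ℕ, T.CutStart e s ∧
    ∃ (q : List ℕ) (k k' : ℕ), cutIntro s <+: q ∧ (q ++ [k]) <+: e ∧ k < k' ∧
      (q ++ [k']) <+: x

/-- `e` is the (n+1)-st executing node in the preorder sequence of the subgraph `S`. -/
def LDTree.IsNthExec (T : LDTree F Pr P Q0) (S : Set (List ℕ)) (n : ℕ) (e : List ℕ) : Prop :=
  e ∈ S ∧ T.ExecNode e ∧ InSeq S e ∧
  {e' : List ℕ | e' ∈ S ∧ T.ExecNode e' ∧ InSeq S e' ∧ PreLt e' e}.Finite ∧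
  {e' : List ℕ | e' ∈ S ∧ T.ExecNode e' ∧ InSeq S e' ∧ PreLt e' e}.ncard = n

/-- The sequence of trees `T_0, T_1, …` of the definition of the pruned LD-tree. -/
def LDTree.stage (T : LDTree F Pr P Q0) : ℕ → Set (List ℕ)
  | 0 => T.dom
  | n+1 => T.stage n \
      {x : List ℕ | ∃ e : List ℕ, T.IsNthExec (T.stage n) n e ∧ T.PrunedByExec e x}

/-- The pruned LD-tree `pruned(T)`: the nodes surviving all stages
and occurring in the preorder sequence of the resulting subgraph. -/
def LDTree.prunedDom (T : LDTree F Pr P Q0) : Set (List ℕ) :=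
  {p ∈ ⋂ n : ℕ, T.stage n | InSeq (⋂ n : ℕ, T.stage n) p}

/-- Composition of the mgu's along a path (auxiliary, from node `q` down `rest`). -/
def LDTree.branchSubstAux (T : LDTree F Pr P Q0) : List ℕ → List ℕ → Subst F
  | _, [] => Subst.idS
  | q, k :: rest => Subst.comp (T.esub (q ++ [k])) (T.branchSubstAux (q ++ [k]) rest)

/-- Composition of the mgu's along the branch from the root to `p`. -/
def LDTree.branchSubst (T : LDTree F Pr P Q0) (p : List ℕ) : Subst F :=
  T.branchSubstAux [] p

/-- The node `p` occurs in a cutting sequence of the subgraph `S` of `T`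
only as its introducing node. -/
def LDTree.OnlyIntro (T : LDTree F Pr P Q0) (S : Set (List ℕ)) (p : List ℕ) : Prop :=
  ∀ e s : List ℕ, e ∈ S → T.ExecNode e → T.CutStart e s →
    (∀ q : List ℕ, cutIntro s <+: q → q <+: e → q ∈ S) →
    cutIntro s <+: p → p <+: e → (s ≠ [] ∧ p = cutIntro s)

end LP

namespace LP

/-! ### Substitutions acting on terms, atoms and queries -/

section Helpers

variable {F Pr : Type}

/-- Structural induction on terms, with the hypothesis available for every argument. -/
theorem Tm.ind {motive : Tm F → Prop} (hv : ∀ n, motive (.var n))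
    (hf : ∀ f ts, (∀ t ∈ ts, motive t) → motive (.fn f ts)) : ∀ t, motive t
  | .var n => hv n
  | .fn f ts => hf f ts (fun t _ => Tm.ind hv hf t)
decreasing_by
  have := List.sizeOf_lt_of_mem ‹t ∈ ts›
  simp only [Tm.fn.sizeOf_spec]
  omega

theorem Tm.subst_var (θ : Subst F) (n : ℕ) : (Tm.var n).subst θ = θ n := by
  simp [Tm.subst]

theorem Tm.subst_fn (θ : Subst F) (f : F) (ts : List (Tm F)) :
    (Tm.fn f ts).subst θ = .fn f (ts.map (Tm.subst θ)) := by
  simp [Tm.subst]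

theorem Tm.mem_vars_var (n m : ℕ) : n ∈ (Tm.var m : Tm F).vars ↔ n = m := by
  simp [Tm.vars, Tm.varsL]

theorem Tm.mem_vars_fn (n : ℕ) (f : F) (ts : List (Tm F)) :
    n ∈ (Tm.fn f ts).vars ↔ ∃ t ∈ ts, n ∈ t.vars := by
  simp [Tm.vars, Tm.varsL]

/-- Two substitutions act identically on a term exactly when they agree on its variables. -/
theorem Tm.subst_eq_iff (θ σ : Subst F) (t : Tm F) :
    t.subst θ = t.subst σ ↔ ∀ x ∈ t.vars, θ x = σ x := by
  induction t using Tm.ind with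
  | hv n => simp [Tm.subst_var, Tm.mem_vars_var]
  | hf f ts ih =>
    simp only [Tm.subst_fn, Tm.fn.injEq, true_and, List.map_inj_left, Tm.mem_vars_fn]
    constructor
    · rintro h x ⟨t, ht, hx⟩
      exact (ih t ht).1 (h t ht) x hx
    · exact fun h t ht => (ih t ht).2 fun x hx => h x ⟨t, ht, hx⟩

theorem Tm.subst_comp (θ σ : Subst F) (t : Tm F) :
    (t.subst θ).subst σ = t.subst (Subst.comp θ σ) := by
  induction t using Tm.ind with
  | hv n => simp [Tm.subst_var, Subst.comp]
  | hf f ts ih =>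
    simp only [Tm.subst_fn, List.map_map, Tm.fn.injEq, true_and, List.map_inj_left]
    exact fun t ht => ih t ht

theorem Tm.subst_idS (t : Tm F) : t.subst Subst.idS = t := by
  induction t using Tm.ind with
  | hv n => simp [Tm.subst_var, Subst.idS]
  | hf f ts ih =>
    rw [Tm.subst_fn]
    congr 1
    conv_rhs => rw [← List.map_id ts]
    exact List.map_inj_left.2 fun t ht => ih t ht

theorem Tm.mem_vars_subst (θ : Subst F) (t : Tm F) (n : ℕ) :
    n ∈ (t.subst θ).vars ↔ ∃ x ∈ t.vars, n ∈ (θ x).vars := by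
  induction t using Tm.ind with
  | hv m => simp [Tm.subst_var, Tm.mem_vars_var]
  | hf f ts ih =>
    simp only [Tm.subst_fn, Tm.mem_vars_fn, List.mem_map]
    constructor
    · rintro ⟨_, ⟨t, ht, rfl⟩, hn⟩
      obtain ⟨x, hx, hn⟩ := (ih t ht).1 hn
      exact ⟨x, ⟨t, ht, hx⟩, hn⟩
    · rintro ⟨x, ⟨t, ht, hx⟩, hn⟩
      exact ⟨_, ⟨t, ht, rfl⟩, (ih t ht).2 ⟨x, hx, hn⟩⟩

theorem Tm.Ground.subst {t : Tm F} (h : t.Ground) (θ : Subst F) : t.subst θ = t := by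
  conv_rhs => rw [← Tm.subst_idS t]
  rw [Tm.subst_eq_iff]
  intro x hx
  rw [Tm.Ground] at h
  simp [h] at hx

theorem Atom.subst_eq_iff (θ σ : Subst F) (A : Atom F Pr) :
    A.subst θ = A.subst σ ↔ ∀ x ∈ A.vars, θ x = σ x := by
  simp only [Atom.subst, Atom.mk.injEq, true_and, List.map_inj_left, Tm.subst_eq_iff,
    Atom.vars, Set.mem_ofPred_eq]
  grind

theorem Atom.subst_comp (θ σ : Subst F) (A : Atom F Pr) :
    (A.subst θ).subst σ = A.subst (Subst.comp θ σ) := by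
  simp [Atom.subst, Tm.subst_comp]

theorem Atom.subst_idS (A : Atom F Pr) : A.subst Subst.idS = A := by
  cases A
  simp only [Atom.subst, Atom.mk.injEq, true_and]
  exact (List.map_congr_left fun t _ => Tm.subst_idS t).trans (List.map_id' _)

theorem Atom.mem_vars_subst (θ : Subst F) (A : Atom F Pr) (n : ℕ) :
    n ∈ (A.subst θ).vars ↔ ∃ x ∈ A.vars, n ∈ (θ x).vars := by
  simp only [Atom.subst, Atom.vars, Set.mem_ofPred_eq, List.mem_map]
  constructor
  · rintro ⟨_, ⟨t, ht, rfl⟩, hn⟩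
    obtain ⟨x, hx, hn⟩ := (Tm.mem_vars_subst θ t n).1 hn
    exact ⟨x, ⟨t, ht, hx⟩, hn⟩
  · rintro ⟨x, ⟨t, ht, hx⟩, hn⟩
    exact ⟨_, ⟨t, ht, rfl⟩, (Tm.mem_vars_subst θ t n).2 ⟨x, hx, hn⟩⟩

theorem EAtom.subst_eq_iff (θ σ : Subst F) (a : EAtom F Pr) :
    a.subst θ = a.subst σ ↔ ∀ x ∈ a.vars, θ x = σ x := by
  cases a <;> simp [EAtom.subst, EAtom.vars, Atom.subst_eq_iff]

theorem EAtom.subst_comp (θ σ : Subst F) (a : EAtom F Pr) :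
    (a.subst θ).subst σ = a.subst (Subst.comp θ σ) := by
  cases a <;> simp [EAtom.subst, Atom.subst_comp]

theorem EAtom.subst_idS (a : EAtom F Pr) : a.subst Subst.idS = a := by
  cases a <;> simp [EAtom.subst, Atom.subst_idS]

theorem EAtom.mem_vars_subst (θ : Subst F) (a : EAtom F Pr) (n : ℕ) :
    n ∈ (a.subst θ).vars ↔ ∃ x ∈ a.vars, n ∈ (θ x).vars := by
  cases a <;> simp [EAtom.subst, EAtom.vars, Atom.mem_vars_subst]

theorem Query.subst_eq_iff (θ σ : Subst F) (Q : Query F Pr) :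
    Query.subst θ Q = Query.subst σ Q ↔ ∀ x ∈ Query.vars Q, θ x = σ x := by
  simp only [Query.subst, List.map_inj_left, EAtom.subst_eq_iff, Query.vars, Set.mem_ofPred_eq]
  grind

theorem Query.subst_comp (θ σ : Subst F) (Q : Query F Pr) :
    Query.subst σ (Query.subst θ Q) = Query.subst (Subst.comp θ σ) Q := by
  simp [Query.subst, EAtom.subst_comp]

theorem Query.subst_idS (Q : Query F Pr) : Query.subst Subst.idS Q = Q := by
  rw [Query.subst]
  conv_rhs => rw [← List.map_id Q]
  exact List.map_inj_left.2 fun t _ => EAtom.subst_idS t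

theorem Query.mem_vars_subst (θ : Subst F) (Q : Query F Pr) (n : ℕ) :
    n ∈ Query.vars (Query.subst θ Q) ↔ ∃ x ∈ Query.vars Q, n ∈ (θ x).vars := by
  simp only [Query.subst, Query.vars, Set.mem_ofPred_eq, List.mem_map]
  constructor
  · rintro ⟨_, ⟨t, ht, rfl⟩, hn⟩
    obtain ⟨x, hx, hn⟩ := (EAtom.mem_vars_subst θ t n).1 hn
    exact ⟨x, ⟨t, ht, hx⟩, hn⟩
  · rintro ⟨x, ⟨t, ht, hx⟩, hn⟩
    exact ⟨_, ⟨t, ht, rfl⟩, (EAtom.mem_vars_subst θ t n).2 ⟨x, hx, hn⟩⟩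

theorem Query.subst_append (θ : Subst F) (Q R : Query F Pr) :
    Query.subst θ (Q ++ R) = Query.subst θ Q ++ Query.subst θ R := by
  simp [Query.subst]

theorem Query.subst_cons (θ : Subst F) (a : EAtom F Pr) (R : Query F Pr) :
    Query.subst θ (a :: R) = EAtom.subst θ a :: Query.subst θ R := by
  simp [Query.subst]

theorem Query.subst_length (θ : Subst F) (Q : Query F Pr) :
    (Query.subst θ Q).length = Q.length := by
  simp [Query.subst]

theorem Query.mem_vars_append (Q R : Query F Pr) (n : ℕ) :
    n ∈ Query.vars (Q ++ R) ↔ n ∈ Query.vars Q ∨ n ∈ Query.vars R := by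
  simp only [Query.vars, Set.mem_ofPred_eq, List.mem_append]
  grind

theorem Query.mem_vars_cons (a : EAtom F Pr) (R : Query F Pr) (n : ℕ) :
    n ∈ Query.vars (a :: R) ↔ n ∈ a.vars ∨ n ∈ Query.vars R := by
  simp [Query.vars]

theorem Subst.comp_assoc (θ σ τ : Subst F) :
    Subst.comp (Subst.comp θ σ) τ = Subst.comp θ (Subst.comp σ τ) := by
  funext n
  simp [Subst.comp, Tm.subst_comp]

theorem Subst.idS_comp (θ : Subst F) : Subst.comp Subst.idS θ = θ := by
  funext n
  simp [Subst.comp, Subst.idS, Tm.subst_var]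

theorem Subst.comp_idS (θ : Subst F) : Subst.comp θ Subst.idS = θ := by
  funext n
  simp [Subst.comp, Tm.subst_idS]

theorem compN_add (θ : ℕ → Subst F) (j a b : ℕ) :
    compN θ j (a + b) = Subst.comp (compN θ j a) (compN θ (j + a) b) := by
  induction a generalizing j with
  | zero => simp [compN, Subst.idS_comp]
  | succ a ih =>
    rw [show a + 1 + b = (a + b) + 1 by omega]
    simp only [compN, Subst.comp_assoc, ih]
    rw [show j + 1 + a = j + (a + 1) by omega]

theorem Subst.eq_var_of_notMem {θ : Subst F} {W : Set ℕ} (h : θ.varSet ⊆ W) {x : ℕ}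
    (hx : x ∉ W) : θ x = .var x := by
  by_contra hne
  exact hx (h (Or.inl hne))

theorem Subst.vars_subset {θ : Subst F} {W : Set ℕ} (h : θ.varSet ⊆ W) {x : ℕ}
    (hx : x ∈ W) : (θ x).vars ⊆ W := by
  intro n hn
  by_cases hne : θ x = .var x
  · rw [hne, Tm.mem_vars_var] at hn
    exact hn ▸ hx
  · exact h (Or.inr ⟨x, hne, hn⟩)

/-- A composition of substitutions all of whose variables lie in `W` fixes every variable
outside `W` and maps variables of `W` to terms over `W`. -/
theorem compN_within (θ : ℕ → Subst F) (W : Set ℕ) (k j : ℕ)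
    (h : ∀ i, j ≤ i → i < j + k → (θ i).varSet ⊆ W) :
    (∀ x ∉ W, compN θ j k x = .var x) ∧ (∀ x ∈ W, (compN θ j k x).vars ⊆ W) := by
  induction k generalizing j with
  | zero =>
    refine ⟨fun x _ => rfl, fun x hx n hn => ?_⟩
    rw [compN, Subst.idS, Tm.mem_vars_var] at hn
    exact hn ▸ hx
  | succ k ih =>
    obtain ⟨h1, h2⟩ := ih (j + 1) fun i hi hi' => h i (by omega) (by omega)
    have hj := h j le_rfl (by omega)
    refine ⟨fun x hx => ?_, fun x hx n hn => ?_⟩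
    · rw [compN, Subst.comp, Subst.eq_var_of_notMem hj hx, Tm.subst_var, h1 x hx]
    · rw [compN, Subst.comp, Tm.mem_vars_subst] at hn
      obtain ⟨y, hy, hn⟩ := hn
      exact h2 y (Subst.vars_subset hj hx hy) hn

/-! ### Truncating the queries of a derivation -/

/-- The query `Q` without its last `L` atoms. -/
def trunc (L : ℕ) (Q : Query F Pr) : Query F Pr := Q.take (Q.length - L)

theorem trunc_append (L : ℕ) (Q R : Query F Pr) (h : L ≤ R.length) :
    trunc L (Q ++ R) = Q ++ trunc L R := by
  rw [trunc, trunc, List.length_append, Nat.add_sub_assoc h, List.take_length_add_append]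

theorem trunc_cons (L : ℕ) (a : EAtom F Pr) (R : Query F Pr) (h : L ≤ R.length) :
    trunc L (a :: R) = a :: trunc L R :=
  trunc_append L [a] R h

theorem trunc_subst (L : ℕ) (θ : Subst F) (Q : Query F Pr) :
    trunc L (Query.subst θ Q) = Query.subst θ (trunc L Q) := by
  simp [trunc, Query.subst, List.map_take]

theorem trunc_eq (Q R : Query F Pr) : trunc R.length (Q ++ R) = Q := by
  simp [trunc]

theorem trunc_length (L : ℕ) (Q : Query F Pr) : (trunc L Q).length = Q.length - L := by
  simp [trunc]

theorem vars_trunc_subset (L : ℕ) (Q : Query F Pr) : Query.vars (trunc L Q) ⊆ Query.vars Q := by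
  rintro n ⟨a, ha, hn⟩
  exact ⟨a, List.mem_of_mem_take ha, hn⟩

/-- A resolution step does not look at atoms behind the selected one. -/
theorem DStep.truncate {Q R : Query F Pr} {θ : Subst F} {oc : Option (Clause F Pr)}
    (h : DStep Q R θ oc) (L : ℕ) (hL : L < Q.length) :
    DStep (trunc L Q) (trunc L R) θ oc := by
  rcases h with ⟨rest, rfl, rfl, h3, h4⟩ | ⟨A, rest, C, rfl, h2, h3, h4, h5, rfl⟩
  · have hL' : L ≤ R.length := by simpa [Nat.lt_succ_iff] using hL
    exact Or.inl ⟨_, trunc_cons L _ _ hL', rfl, h3, h4⟩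
  · have hL' : L ≤ rest.length := by simpa [Nat.lt_succ_iff] using hL
    refine Or.inr ⟨A, _, C, trunc_cons L _ _ hL', h2, h3, h4, h5, ?_⟩
    rw [trunc_subst, trunc_append _ _ _ hL']

theorem DStep.length_le {Q R : Query F Pr} {θ : Subst F} {oc : Option (Clause F Pr)}
    (h : DStep Q R θ oc) : Q.length ≤ R.length + 1 := by
  rcases h with ⟨rest, rfl, rfl, -, -⟩ | ⟨A, rest, C, rfl, -, -, -, -, rfl⟩
  · simp
  · simp [Query.subst_length]

theorem DStep.tail_step {Q R Q2 : Query F Pr} {a : EAtom F Pr} {θ : Subst F}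
    {oc : Option (Clause F Pr)} (h : DStep (a :: Q ++ R) Q2 θ oc) :
    ∃ p, Q2 = p ++ Query.subst θ R := by
  rcases h with ⟨rest, h1, rfl, rfl, -⟩ | ⟨A, rest, C, h1, -, -, -, -, rfl⟩
  · rw [List.cons_append, List.cons.injEq] at h1
    exact ⟨Q, by rw [Query.subst_idS, h1.2]⟩
  · rw [List.cons_append, List.cons.injEq] at h1
    refine ⟨Query.subst θ (C.body ++ Q), ?_⟩
    rw [← h1.2, ← Query.subst_append, List.append_assoc]

/-- The variables of a step stay within any set containing the variables of the query and of
the clause used. -/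
theorem DStep.vars_within {Q R : Query F Pr} {θ : Subst F} {oc : Option (Clause F Pr)}
    (h : DStep Q R θ oc) {W : Set ℕ} (hQ : Query.vars Q ⊆ W)
    (hC : ∀ C, oc = some C → C.vars ⊆ W) : θ.varSet ⊆ W ∧ Query.vars R ⊆ W := by
  rcases h with ⟨rest, rfl, rfl, rfl, -⟩ | ⟨A, rest, C, rfl, rfl, -, -, h5, rfl⟩
  · refine ⟨?_, fun n hn => hQ ((Query.mem_vars_cons _ _ _).2 (Or.inr hn))⟩
    rintro n (hn | ⟨m, hm, -⟩)
    · exact absurd rfl hn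
    · exact absurd rfl hm
  · have hC := hC C rfl
    have hθ : θ.varSet ⊆ W := by
      intro n hn
      rcases h5 hn with h | h
      · exact hQ ((Query.mem_vars_cons _ _ _).2 (Or.inl h))
      · exact hC (Or.inl h)
    refine ⟨hθ, fun n hn => ?_⟩
    obtain ⟨x, hx, hn⟩ := (Query.mem_vars_subst _ _ _).1 hn
    refine Subst.vars_subset hθ ?_ hn
    rcases (Query.mem_vars_append _ _ _).1 hx with hx | hx
    · exact hC (Or.inr hx)
    · exact hQ ((Query.mem_vars_cons _ _ _).2 (Or.inr hx))

theorem histVars_mono (Q : ℕ → Query F Pr) (sub : ℕ → Subst F)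
    (cls : ℕ → Option (Clause F Pr)) {i j : ℕ} (h : i ≤ j) :
    histVars Q sub cls i ⊆ histVars Q sub cls j := by
  rintro n (⟨k, hk, hn⟩ | ⟨k, hk, hn⟩ | ⟨k, hk, hn⟩)
  · exact Or.inl ⟨k, hk.trans h, hn⟩
  · exact Or.inr (Or.inl ⟨k, hk.trans_le h, hn⟩)
  · exact Or.inr (Or.inr ⟨k, hk.trans_le h, hn⟩)

/-- The derivation obtained by deleting the last `L` atoms from every query; it is legitimate
as long as the selected atom is never among them. -/
def Deriv.truncate (D : Deriv F Pr) (L : ℕ) (hL : ∀ i < D.len, L < (D.Q i).length) :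
    Deriv F Pr where
  len := D.len
  Q i := trunc L (D.Q i)
  sub := D.sub
  cls := D.cls
  step i hi := (D.step i hi).truncate L (hL i hi)
  fresh i hi C hC := by
    refine (D.fresh i hi C hC).mono_right ?_
    rintro n (⟨k, hk, hn⟩ | hn)
    · exact Or.inl ⟨k, hk, vars_trunc_subset _ _ hn⟩
    · exact Or.inr hn

/-- While a suffix `R` of the `j`-th query is protected, it is only instantiated. -/
theorem Deriv.suffix_eq (D : Deriv F Pr) (B R : Query F Pr) (j k : ℕ) (hj : D.Q j = B ++ R)
    (hlen : j + k ≤ D.len) (hk : ∀ i, j ≤ i → i < j + k → R.length < (D.Q i).length) :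
    ∃ p, D.Q (j + k) = p ++ Query.subst (compN D.sub j k) R := by
  induction k with
  | zero => exact ⟨B, by simpa [compN, Query.subst_idS] using hj⟩
  | succ k ih =>
    obtain ⟨p, hp⟩ := ih (by omega) fun i h1 h2 => hk i h1 (by omega)
    have hl := hk (j + k) (by omega) (by omega)
    have hs := D.step (j + k) (by omega)
    rw [hp] at hl hs
    cases p with
    | nil => simp [Query.subst_length] at hl
    | cons a p =>
      obtain ⟨q, hq⟩ := hs.tail_step
      refine ⟨q, ?_⟩
      rw [← add_assoc, hq, Query.subst_comp, compN_add]
      simp only [compN, Subst.comp_idS]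

/-- If the prefix `B` of a query succeeds, each atom of its computed answer is an instance of an
atomic computed answer, hence belongs to `post` when atomic computed answers do. -/
theorem Deriv.answers_in_post (D : Deriv F Pr) (post : Set (Atom F Pr))
    (hpost : SubstClosed post)
    (hD : ∀ j m : ℕ, ∀ (A : Atom F Pr) (rest : Query F Pr), D.Q j = .atm A :: rest →
        D.SuffixEndsAt j rest.length m → Atom.subst (compN D.sub j (m - j)) A ∈ post)
    (m : ℕ) (B R : Query F Pr) (j : ℕ) (hj : D.Q j = B ++ R)
    (hend : D.SuffixEndsAt j R.length m) :
    SpecModels post (Query.subst (compN D.sub j (m - j)) B) := by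
  induction hn : B.length generalizing B R j with
  | zero =>
    obtain rfl : B = [] := List.length_eq_zero_iff.1 hn
    intro a ha
    simp [Query.subst] at ha
  | succ n ih =>
    obtain ⟨hjm, hml, hlong, hlast⟩ := hend
    cases B with
    | nil => simp at hn
    | cons b B =>
      -- `m'` is the first position where `b` has been resolved away.
      have hex : ∃ i, j ≤ i ∧ (D.Q i).length ≤ (B ++ R).length :=
        ⟨m, hjm, by simp [hlast]⟩
      classical
      let m' := Nat.find hex
      obtain ⟨hjm', hm'⟩ : j ≤ m' ∧ (D.Q m').length ≤ (B ++ R).length := Nat.find_spec hex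
      have hm'm : m' ≤ m := Nat.find_min' hex ⟨hjm, by simp [hlast]⟩
      have hbefore : ∀ i, j ≤ i → i < m' → (B ++ R).length < (D.Q i).length := by
        intro i h1 h2
        by_contra hc
        exact Nat.find_min hex h2 ⟨h1, by omega⟩
      have hne : m' ≠ j := by
        intro h
        rw [h, hj] at hm'
        simp at hm'
      have hlen' : (D.Q m').length = (B ++ R).length := by
        have h1 := hbefore (m' - 1) (by omega) (by omega)
        have h2 := (D.step (m' - 1) (by omega)).length_le
        rw [show m' - 1 + 1 = m' by omega] at h2
        omega
      have hsplit : compN D.sub j (m - j) =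
          Subst.comp (compN D.sub j (m' - j)) (compN D.sub m' (m - m')) := by
        rw [show m - j = (m' - j) + (m - m') by omega, compN_add,
          show j + (m' - j) = m' by omega]
      obtain ⟨p, hp⟩ := D.suffix_eq [b] (B ++ R) j (m' - j) hj (by omega)
        fun i h1 h2 => hbefore i h1 (by omega)
      rw [show j + (m' - j) = m' by omega] at hp
      obtain rfl : p = [] := by
        have := congrArg List.length hp
        rw [List.length_append, Query.subst_length] at this
        exact List.length_eq_zero_iff.1 (by omega)
      rw [List.nil_append, Query.subst_append] at hp
      have hrest := ih _ _ m' hp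
        ⟨hm'm, hml, fun i h1 h2 => by
          rw [Query.subst_length]; exact hlong i (by omega) h2, by
          rw [Query.subst_length]; exact hlast⟩
        (by rw [Query.subst_length]; simpa using hn)
      rw [Query.subst_comp, ← hsplit] at hrest
      rw [Query.subst_cons]
      intro a ha
      rcases List.mem_cons.1 ha with rfl | ha
      · cases b with
        | cut => trivial
        | atm A =>
          have := hD j m' A (B ++ R) hj ⟨hjm', by omega, hbefore, hlen'⟩
          simp only [EAtom.subst, EAtomIn]
          rw [hsplit, ← Atom.subst_comp]
          exact hpost _ this _
      · exact hrest a ha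

theorem Clause.Inst.trans {C1 C2 C3 : Clause F Pr} (h1 : Clause.Inst C1 C2)
    (h2 : Clause.Inst C2 C3) : Clause.Inst C1 C3 := by
  obtain ⟨θ, rfl⟩ := h1
  obtain ⟨σ, rfl⟩ := h2
  exact ⟨Subst.comp σ θ, by simp [Clause.subst, Atom.subst_comp, Query.subst_comp]⟩

/-- Instantiating every query of a derivation by the mgu's still to come and a final
substitution `σ` yields an unrestricted derivation, all of whose specializations may be taken
empty. -/
theorem Deriv.exists_lowering {P : Prog F Pr} (D : Deriv F Pr) (hP : D.FromProg P)
    (σ : Subst F) :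
    ∃ E : UDeriv F Pr P, IsLift D E ∧
      E.Q 0 = Query.subst (Subst.comp (compN D.sub 0 D.len) σ) (D.Q 0) ∧
      E.Q E.len = Query.subst σ (D.Q D.len) := by
  have hcls : ∀ i, ∃ o : Option (Clause F Pr), i < D.len → (D.cls i = none → o = none) ∧
      ∀ C, D.cls i = some C → ∃ C0 ∈ P, Variant C C0 ∧ o = some C0 := by
    intro i
    cases hc : D.cls i with
    | none => exact ⟨none, by simp⟩
    | some C =>
      by_cases hi : i < D.len
      · obtain ⟨C0, h1, h2⟩ := hP i hi C hc
        refine ⟨some C0, fun _ => ⟨by simp, fun C' hC' => ?_⟩⟩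
        obtain rfl := Option.some.inj hC'
        exact ⟨C0, h1, h2, rfl⟩
      · exact ⟨none, fun h => absurd h hi⟩
  choose cls hcls using hcls
  have hnone : ∀ i < D.len, D.cls i = none → cls i = none := fun i hi => (hcls i hi).1
  have hsome : ∀ i < D.len, ∀ C, D.cls i = some C →
      ∃ C0 ∈ P, Variant C C0 ∧ cls i = some C0 := fun i hi => (hcls i hi).2
  let μ : ℕ → Subst F := fun i => Subst.comp (compN D.sub i (D.len - i)) σ
  have hμ : ∀ i < D.len, μ i = Subst.comp (D.sub i) (μ (i + 1)) := by
    intro i hi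
    simp only [μ]
    rw [show D.len - i = (D.len - (i + 1)) + 1 by omega, compN, Subst.comp_assoc]
  refine ⟨⟨D.len, fun i => Query.subst (μ i) (D.Q i), fun _ => Subst.idS, cls, ?_⟩,
    ⟨⟨_, rfl⟩, rfl, fun i hi => ⟨?_, ?_⟩⟩, rfl, ?_⟩
  · intro i hi
    rcases D.step i hi with ⟨rest, h1, h2, h3, h4⟩ | ⟨A, rest, C, h1, h2, h3, h4, h5, h6⟩
    · refine Or.inl ⟨Query.subst (μ i) rest, ?_, ?_, rfl, hnone i hi h4⟩
      · simp only [h1, Query.subst_cons, EAtom.subst]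
      · simp only [h2, hμ i hi, h3, Subst.idS_comp]
    · obtain ⟨C0, hC0, hv, hcls⟩ := hsome i hi C h2
      refine Or.inr ⟨Atom.subst (μ i) A, Query.subst (μ i) rest, Query.subst (μ i) C.body, C0,
        ?_, hcls, hC0, ?_, Clause.Inst.trans ⟨μ i, ?_⟩ hv.1, ?_⟩
      · simp only [h1, Query.subst_cons, EAtom.subst]
      · exact fun n hn => absurd rfl hn
      · rw [Clause.subst, Atom.subst_idS, hμ i hi, ← Atom.subst_comp, h3.1, Atom.subst_comp]
      · simp only [h6, Query.subst_idS, hμ i hi, ← Query.subst_comp, Query.subst_append]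
  · constructor
    · intro h
      by_contra hc
      obtain ⟨C, hc⟩ := Option.ne_none_iff_exists'.1 hc
      obtain ⟨C0, -, -, h'⟩ := hsome i hi C hc
      simp [h'] at h
    · exact hnone i hi
  · intro C0 C hC0 hC
    obtain ⟨C1, -, hv, h'⟩ := hsome i hi C hC
    obtain rfl : C1 = C0 := Option.some.inj (h'.symm.trans hC0)
    exact hv
  · simp only [μ, Nat.sub_self, compN, Subst.idS_comp]

end Helpers

/-- **Lemma 3 of the paper.**  Let `P` be c-s-correct w.r.t. `(pre, post)` and `Q_0`
well-asserted.  Let `D = Q_0,…,Q_n` be an LD-derivation whose first step applies a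
clause variant `C = H ← B⃗0, !, B⃗1` to `Q_0 = A :: Q'`, and such that `Q_1,…,Q_n` is a
successful subderivation for `B⃗0 θ_1`, so that `Q_n = (! :: B⃗1 ++ Q')θ_1⋯θ_n`.
If `S ⊨ Q_0 σ_0` for a ground instance `Q_0 σ_0` and `A σ_0` is c-covered by `C`
w.r.t. `S, pre, post`, then there is a ground instance `Q_n σ'` with `S ⊨ Q_n σ'`,
and `Q_0 σ_0` and `Q_n σ'` are the first and last queries of an unrestricted
LD-derivation of which `D` is a lift. -/
theorem cut_subderivation_lemma {F Pr : Type} (P : Prog F Pr)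
    (S pre post : Set (Atom F Pr)) (hSg : ∀ A ∈ S, A.Ground)
    (hpre : SubstClosed pre) (hpost : SubstClosed post)
    (hcs : CsCorrect P pre post)
    (D : Deriv F Pr) (hP : D.FromProg P)
    (hwa : WellAssertedQuery pre post (D.Q 0))
    (A : Atom F Pr) (Q' B0 B1 : Query F Pr) (C : Clause F Pr)
    (h0 : D.Q 0 = .atm A :: Q')
    (hC : D.cls 0 = some C) (hCbody : C.body = B0 ++ .cut :: B1)
    (hpos : 1 ≤ D.len)
    (hsubder : D.SuffixEndsAt 1 (1 + B1.length + Q'.length) D.len)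
    (hQn : D.Q D.len = Query.subst (compN D.sub 0 D.len) (.cut :: (B1 ++ Q')))
    (σ0 : Subst F)
    (hg0 : Query.Ground (Query.subst σ0 (D.Q 0)))
    (hs0 : SpecModels S (Query.subst σ0 (D.Q 0)))
    (i : ℕ) (hcc : CCoveredBy P S pre post (Atom.subst σ0 A) C i) :
    ∃ σ' : Subst F, Query.Ground (Query.subst σ' (D.Q D.len)) ∧
      SpecModels S (Query.subst σ' (D.Q D.len)) ∧
      ∃ E : UDeriv F Pr P, IsLift D E ∧
        E.Q 0 = Query.subst σ0 (D.Q 0) ∧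
        E.Q E.len = Query.subst σ' (D.Q D.len) := by
  classical
  -- Abbreviations: `n` the length, `θ₀` the first mgu, `φ` the composition of the others.
  set n := D.len with hn
  set θ₀ := D.sub 0 with hθ₀
  set φ : Subst F := compN D.sub 1 (n - 1) with hφ
  have hcomp : compN D.sub 0 n = Subst.comp θ₀ φ := by
    rw [show n = (n - 1) + 1 by omega]
    rfl
  obtain ⟨hmgu, hidem, hrel, hQ1⟩ : IsMgu θ₀ A C.head ∧ θ₀.Idempotent ∧ Relevant θ₀ A C.head ∧
      D.Q 1 = Query.subst θ₀ (B0 ++ (.cut :: B1 ++ Q')) := by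
    rcases D.step 0 (by omega) with ⟨rest, h1, -⟩ | ⟨A', rest, C', h1, h2, h3, h4, h5, h6⟩
    · rw [h0] at h1
      cases h1
    · rw [h0] at h1
      rw [hC] at h2
      cases h1
      cases h2
      exact ⟨h3, h4, h5, by rw [h6, hCbody, List.append_assoc]⟩
  have hfresh := D.fresh 0 (by omega) C hC
  have hvA : ∀ x ∈ A.vars, x ∈ Query.vars (D.Q 0) := fun x hx => by
    rw [h0]; exact (Query.mem_vars_cons _ _ _).2 (Or.inl hx)
  have hdisj : ∀ x ∈ Query.vars (D.Q 0), x ∉ C.vars := fun x hx hx' =>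
    Set.disjoint_left.1 hfresh hx' (Or.inl ⟨0, le_rfl, hx⟩)
  have hheadC : C.head.vars ⊆ C.vars := fun x hx => Or.inl hx
  have hB0C : Query.vars B0 ⊆ C.vars := fun x hx => Or.inr (by
    rw [hCbody]; exact (Query.mem_vars_append _ _ _).2 (Or.inl hx))
  have hB1C : Query.vars B1 ⊆ C.vars := fun x hx => Or.inr (by
    rw [hCbody]
    exact (Query.mem_vars_append _ _ _).2 (Or.inr ((Query.mem_vars_cons _ _ _).2 (Or.inr hx))))
  have hsel : A ∈ pre := by
    have h := hwa Subst.idS 0 (by simp [h0]) (by simp) (.atm A) (by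
      rw [Query.subst_idS, h0]; rfl)
    exact h
  obtain ⟨hCP, ⟨θc, hθcg, hθch, -⟩, -, h3⟩ := hcc
  -- `B0 θ₀ φ` lies in `post`, by correctness applied to the subderivation for `A`.
  have hposts : SpecModels post (Query.subst φ (Query.subst θ₀ B0)) := by
    have hL : ∀ i < D.len, Q'.length < (D.Q i).length := by
      intro i hi
      rcases Nat.eq_zero_or_pos i with rfl | hi0
      · simp [h0]
      · have := hsubder.2.2.1 i hi0 hi
        omega
    let T := D.truncate Q'.length hL
    have hT := (hcs T hP ⟨A, hsel, by
      change trunc Q'.length (D.Q 0) = _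
      rw [h0]
      exact trunc_eq [.atm A] Q'⟩).2
    have hT1 : T.Q 1 = Query.subst θ₀ B0 ++ Query.subst θ₀ (.cut :: B1) := by
      change trunc Q'.length (D.Q 1) = _
      rw [hQ1, trunc_subst, ← List.append_assoc, trunc_eq, Query.subst_append]
    refine T.answers_in_post post hpost hT n _ _ 1 hT1 ⟨hpos, le_rfl, fun i h1 h2 => ?_, ?_⟩
    · have := hsubder.2.2.1 i h1 h2
      change _ < (trunc Q'.length (D.Q i)).length
      rw [trunc_length, Query.subst_length, List.length_cons]
      omega
    · have : (D.Q D.len).length = 1 + B1.length + Q'.length := hsubder.2.2.2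
      change (trunc Q'.length (D.Q D.len)).length = _
      rw [trunc_length, Query.subst_length, List.length_cons]
      omega
  -- `W` is the set of variables reachable by the subderivation for `B0 θ₀`.
  set V : Set ℕ := Query.vars (Query.subst θ₀ B0) with hV
  set W : Set ℕ := V ∪ {x | ∃ j, 1 ≤ j ∧ j < n ∧ ∃ C', D.cls j = some C' ∧ x ∈ C'.vars} with hW
  have hVW : V ⊆ W := Set.subset_union_left
  have hWhist : ∀ x ∈ histVars D.Q D.sub D.cls 1, x ∉ V → x ∉ W := by
    rintro x hx hxV (hx' | ⟨j, h1, h2, C', hC', hx'⟩)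
    · exact hxV hx'
    · exact Set.disjoint_left.1 (D.fresh j h2 C' hC') hx' (histVars_mono _ _ _ h1 hx)
  obtain ⟨hfix, hin⟩ : (∀ x ∉ W, φ x = .var x) ∧ (∀ x ∈ W, (φ x).vars ⊆ W) := by
    set L := 1 + B1.length + Q'.length with hL
    have hstep : ∀ i, 1 ≤ i → i < n →
        DStep (trunc L (D.Q i)) (trunc L (D.Q (i + 1))) (D.sub i) (D.cls i) := fun i h1 h2 =>
      (D.step i h2).truncate L (hsubder.2.2.1 i h1 h2)
    have hcl : ∀ i, 1 ≤ i → i < n → ∀ C', D.cls i = some C' → C'.vars ⊆ W :=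
      fun i h1 h2 C' hC' x hx => Or.inr ⟨i, h1, h2, C', hC', hx⟩
    have hvars : ∀ i, 1 ≤ i → i ≤ n → Query.vars (trunc L (D.Q i)) ⊆ W := by
      intro i h1
      induction i, h1 using Nat.le_induction with
      | base =>
        intro _
        have : L = (.cut :: B1 ++ Q' : Query F Pr).length := by
          simp [hL]; omega
        rw [hQ1, trunc_subst, this, trunc_eq]
        exact hVW
      | succ i h1 ih =>
        exact fun h2 => ((hstep i h1 h2).vars_within (ih (by omega)) (hcl i h1 h2)).2
    refine compN_within D.sub W (n - 1) 1 fun i h1 h2 => ?_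
    exact ((hstep i h1 (by omega)).vars_within (hvars i h1 (by omega))
      (hcl i h1 (by omega))).1
  -- A grounding substitution; ground terms are missing only when there is nothing to ground.
  obtain ⟨γ, hγ⟩ : ∃ γ : Subst F, ∀ x ∈ V, ((φ x).subst γ).Ground := by
    by_cases hex : ∃ t : Tm F, t.Ground
    · obtain ⟨t, ht⟩ := hex
      refine ⟨fun _ => t, fun x _ => ?_⟩
      rw [Tm.Ground, Set.eq_empty_iff_forall_notMem]
      intro m hm
      obtain ⟨y, -, hm⟩ := (Tm.mem_vars_subst _ _ _).1 hm
      rw [Tm.Ground] at ht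
      simp [ht] at hm
    · refine ⟨Subst.idS, fun x hx => ?_⟩
      obtain ⟨y, hy, -⟩ := (Query.mem_vars_subst _ _ _).1 hx
      refine absurd ⟨θc y, ?_⟩ hex
      rw [Tm.Ground, Set.eq_empty_iff_forall_notMem]
      intro m hm
      have : m ∈ (Clause.subst θc C).vars := by
        rcases hB0C hy with h | h
        · exact Or.inl ((Atom.mem_vars_subst _ _ _).2 ⟨y, h, hm⟩)
        · exact Or.inr ((Query.mem_vars_subst _ _ _).2 ⟨y, h, hm⟩)
      rw [Clause.Ground] at hθcg
      simp [hθcg] at this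
  -- `ρ` restricts `θ₀` to the head variables; it acts as `θ₀` on the whole clause.
  let ρ : Subst F := fun x => if x ∈ C.head.vars then θ₀ x else .var x
  have hρ : ∀ x ∈ C.vars, ρ x = θ₀ x := by
    intro x hx
    by_cases hxh : x ∈ C.head.vars
    · simp [ρ, hxh]
    · simp only [ρ, hxh, if_false]
      refine (Subst.eq_var_of_notMem hrel ?_).symm
      rintro (h | h)
      · exact hdisj x (hvA x h) hx
      · exact hxh h
  have hρne : ∀ x, ρ x ≠ .var x → x ∈ C.head.vars ∧ ρ x = θ₀ x := by
    intro x hx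
    by_cases hxh : x ∈ C.head.vars
    · exact ⟨hxh, hρ x (hheadC hxh)⟩
    · simp [ρ, hxh] at hx
  have hρdom : ∀ x ∈ ρ.dom, x ∈ θ₀.dom := fun x hx => by
    have h := (hρne x hx).2
    simp only [Subst.dom, Set.mem_ofPred_eq] at hx ⊢
    rwa [h] at hx
  have hρrng : ∀ x ∈ ρ.rng, x ∈ θ₀.rng := by
    rintro x ⟨y, hy, hx⟩
    have h := (hρne y hy).2
    rw [h] at hy hx
    exact ⟨y, hy, hx⟩
  have hρH : Atom.subst ρ C.head = Atom.subst θ₀ C.head :=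
    (Atom.subst_eq_iff _ _ _).2 fun x hx => hρ x (hheadC hx)
  have hρB0 : Query.subst ρ B0 = Query.subst θ₀ B0 :=
    (Query.subst_eq_iff _ _ _).2 fun x hx => hρ x (hB0C hx)
  have hρB1 : Query.subst ρ B1 = Query.subst θ₀ B1 :=
    (Query.subst_eq_iff _ _ _).2 fun x hx => hρ x (hB1C hx)
  -- `σ0` on `A` together with the covering instance of `C` unifies `A` with the head.
  have hinst : Atom.Inst (Atom.subst σ0 A) (Atom.subst θ₀ C.head) := by
    let μ : Subst F := fun x => if x ∈ A.vars then σ0 x else θc x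
    have hμA : Atom.subst μ A = Atom.subst σ0 A :=
      (Atom.subst_eq_iff _ _ _).2 fun x hx => by simp [μ, hx]
    have hμH : Atom.subst μ C.head = Atom.subst θc C.head :=
      (Atom.subst_eq_iff _ _ _).2 fun x hx => by
        have : x ∉ A.vars := fun h => hdisj x (hvA x h) (hheadC hx)
        simp [μ, this]
    obtain ⟨δ, hδ⟩ := hmgu.2 μ (by rw [Unifies, hμA, hμH, hθch])
    refine ⟨δ, ?_⟩
    rw [Atom.subst_comp, ← hθch, ← hμH]
    exact (Atom.subst_eq_iff _ _ _).2 fun x _ => hδ x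
  -- `η` is the ground computed answer for `B0 θ₀`.
  let η : Subst F := fun x => if x ∈ V then (φ x).subst γ else .var x
  have hηV : ∀ x ∈ V, η x = (φ x).subst γ := fun x hx => by simp [η, hx]
  have hηdom : Subst.dom η = V := by
    ext x
    simp only [Subst.dom, Set.mem_ofPred_eq]
    by_cases hx : x ∈ V
    · simp only [hx, iff_true]
      intro h
      have hg := hγ x hx
      rw [← hηV x hx, h, Tm.Ground, Set.eq_empty_iff_forall_notMem] at hg
      exact hg x ((Tm.mem_vars_var _ _).2 rfl)
    · simp [η, hx]
  obtain ⟨θ, hθg, hθH, hθS⟩ := h3 B0 B1 hCbody ρ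
    (fun x hx => (hρne x hx).1)
    (fun x hx => by
      obtain ⟨y, hy, hx'⟩ := hρrng x hx.1
      rcases hrel (Or.inr ⟨y, hy, hx'⟩) with h | h
      · exact absurd hx.2 (hdisj x (hvA x h))
      · exact h)
    (Set.disjoint_left.2 fun x hx hx' => Set.disjoint_left.1 hidem (hρdom x hx) (hρrng x hx'))
    (by rw [hρH, ← hmgu.1]; exact hpre A hsel θ₀)
    (by rw [hρH]; exact hinst)
    η (by rw [hρB0]; exact hηdom)
    (by
      rw [hρB0, Query.Ground, Set.eq_empty_iff_forall_notMem]
      intro m hm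
      obtain ⟨y, hy, hm⟩ := (Query.mem_vars_subst _ _ _).1 hm
      have hg := hγ y hy
      rw [← hηV y hy, Tm.Ground, Set.eq_empty_iff_forall_notMem] at hg
      exact hg m hm)
    (by
      have : Query.subst η (Query.subst θ₀ B0) =
          Query.subst γ (Query.subst φ (Query.subst θ₀ B0)) := by
        rw [Query.subst_comp φ γ]
        exact (Query.subst_eq_iff _ _ _).2 fun x hx => hηV x hx
      rw [hρB0, this]
      intro a ha
      obtain ⟨b, hb, rfl⟩ := List.mem_map.1 ha
      cases b with
      | cut => trivial
      | atm b => exact hpost b (hposts _ hb) γ)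
  simp only [hρH, hρB1, Atom.subst_comp, Query.subst_comp, Clause.subst] at hθg hθH hθS
  -- The substitution `τ` solves the clause instance on `vars (C θ₀)` and is `σ0` elsewhere.
  let U : Set ℕ := (Clause.subst θ₀ C).vars
  have hVU : V ⊆ U := fun x hx => by
    obtain ⟨y, hy, hx⟩ := (Query.mem_vars_subst _ _ _).1 hx
    refine Or.inr ((Query.mem_vars_subst _ _ _).2 ⟨y, ?_, hx⟩)
    rw [hCbody]
    exact (Query.mem_vars_append _ _ _).2 (Or.inl hy)
  have hU : ∀ y ∈ C.vars, ∀ x ∈ (θ₀ y).vars, x ∈ U := by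
    rintro y (hy | hy) x hx
    · exact Or.inl ((Atom.mem_vars_subst _ _ _).2 ⟨y, hy, hx⟩)
    · exact Or.inr ((Query.mem_vars_subst _ _ _).2 ⟨y, hy, hx⟩)
  let τ : Subst F := fun x => if x ∈ U then (η x).subst θ else σ0 x
  let σ' : Subst F := fun x => if x ∈ W then γ x else τ x
  -- The variables relevant below all occur in the history of the first step.
  have hτ : ∀ x ∈ histVars D.Q D.sub D.cls 1, Subst.comp φ σ' x = τ x := by
    intro x hx
    by_cases hxV : x ∈ V
    · have h1 : Subst.comp φ σ' x = (φ x).subst γ :=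
        (Tm.subst_eq_iff _ _ _).2 fun y hy => by
          simp [σ', hin x (hVW hxV) hy]
      simp only [h1, τ, hVU hxV, if_true, hηV x hxV]
      exact ((hγ x hxV).subst θ).symm
    · have hxW := hWhist x hx hxV
      rw [Subst.comp, hfix x hxW, Tm.subst_var]
      simp [σ', hxW]
  have hθ₀hist : ∀ y ∈ Query.vars (D.Q 0) ∪ C.vars, ∀ x ∈ (θ₀ y).vars,
      x ∈ histVars D.Q D.sub D.cls 1 := by
    have hsub : θ₀.varSet ⊆ histVars D.Q D.sub D.cls 1 :=
      fun x hx => Or.inr (Or.inl ⟨0, by omega, hx⟩)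
    rintro y (hy | hy) x hx
    · exact Subst.vars_subset hsub (Or.inl ⟨0, by omega, hy⟩) hx
    · exact Subst.vars_subset hsub (Or.inr (Or.inr ⟨0, by omega, C, hC, hy⟩)) hx
  -- The final substitution extends the covering instance on the clause and `σ0` on the query.
  have hfinC : ∀ y ∈ C.vars,
      Subst.comp (Subst.comp θ₀ φ) σ' y = Subst.comp θ₀ (Subst.comp η θ) y := by
    intro y hy
    rw [Subst.comp_assoc]
    refine (Tm.subst_eq_iff _ _ _).2 fun x hx => ?_
    rw [hτ x (hθ₀hist y (Or.inr hy) x hx)]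
    simp [τ, hU y hy x hx, Subst.comp]
  have hfinA : ∀ y ∈ A.vars, Subst.comp (Subst.comp θ₀ φ) σ' y = σ0 y := by
    refine (Atom.subst_eq_iff _ _ _).1 ?_
    rw [Subst.comp_assoc, ← Atom.subst_comp, hmgu.1, Atom.subst_comp, ← Subst.comp_assoc, ← hθH]
    refine ((Atom.subst_eq_iff _ _ _).2 fun y hy => hfinC y (hheadC hy)).trans ?_
    simp only [Subst.comp_assoc]
  have hfinQ : ∀ y ∈ Query.vars (D.Q 0), Subst.comp (Subst.comp θ₀ φ) σ' y = σ0 y := by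
    intro y hy
    by_cases hyA : y ∈ A.vars
    · exact hfinA y hyA
    · have hyH : y ∉ C.head.vars := fun h => hdisj y hy (hheadC h)
      have hyU : y ∉ U := by
        intro h
        have : ∃ z ∈ C.vars, y ∈ (θ₀ z).vars := by
          rcases h with h | h
          · obtain ⟨z, hz, h⟩ := (Atom.mem_vars_subst _ _ _).1 h
            exact ⟨z, Or.inl hz, h⟩
          · obtain ⟨z, hz, h⟩ := (Query.mem_vars_subst _ _ _).1 h
            exact ⟨z, Or.inr hz, h⟩
        obtain ⟨z, hz, h⟩ := this
        by_cases hzv : θ₀ z = .var z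
        · rw [hzv, Tm.mem_vars_var] at h
          exact hdisj y hy (h ▸ hz)
        · rcases hrel (Or.inr ⟨z, hzv, h⟩) with h | h
          exacts [hyA h, hyH h]
      have hθy : θ₀ y = .var y := Subst.eq_var_of_notMem hrel (by
        rintro (h | h)
        exacts [hyA h, hyH h])
      rw [Subst.comp_assoc, Subst.comp, hθy, Tm.subst_var,
        hτ y (Or.inl ⟨0, by omega, hy⟩)]
      simp [τ, hyU]
  have hfin : Query.subst σ' (D.Q n) =
      .cut :: (Query.subst (Subst.comp θ₀ (Subst.comp η θ)) B1 ++ Query.subst σ0 Q') := by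
    rw [hQn, Query.subst_comp, hcomp, Query.subst_cons, Query.subst_append]
    congr 2
    · exact (Query.subst_eq_iff _ _ _).2 fun y hy => hfinC y (hB1C hy)
    · refine (Query.subst_eq_iff _ _ _).2 fun y hy => hfinQ y ?_
      rw [h0]
      exact (Query.mem_vars_cons _ _ _).2 (Or.inr hy)
  obtain ⟨E, hlift, hE0, hEn⟩ := D.exists_lowering hP σ'
  refine ⟨σ', ?_, ?_, E, hlift, ?_, hEn⟩
  · rw [hfin, Query.Ground, Set.eq_empty_iff_forall_notMem]
    intro m hm
    rcases (Query.mem_vars_cons _ _ _).1 hm with hm | hm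
    · exact hm
    rcases (Query.mem_vars_append _ _ _).1 hm with hm | hm
    · rw [Clause.Ground, Set.eq_empty_iff_forall_notMem] at hθg
      refine hθg m (Or.inr ?_)
      simpa only [Subst.comp_assoc] using hm
    · rw [h0, Query.subst_cons, Query.Ground, Set.eq_empty_iff_forall_notMem] at hg0
      exact hg0 m ((Query.mem_vars_cons _ _ _).2 (Or.inr hm))
  · rw [hfin]
    intro a ha
    rcases List.mem_cons.1 ha with rfl | ha
    · trivial
    rcases List.mem_append.1 ha with ha | ha
    · refine hθS a ?_
      simpa only [Subst.comp_assoc] using ha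
    · refine hs0 a ?_
      rw [h0, Query.subst_cons]
      exact List.mem_cons_of_mem _ ha
  · rw [hE0, ← hn, hcomp]
    exact (Query.subst_eq_iff _ _ _).2 hfinQ

end LP
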